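/- Suppose there exist n+1 mutually unbiased orthonormal bases of ℂ^n and an affine plane of order n. Then there exists a set S of n² functions {0,1,…,n} → {1,…,n} such that the family {ψ_f : f ∈ S} is an orthonormal basis of ℂ^n ⊗ ℂ^n. -/

import Mathlib

open scoped ComplexInnerProductSpace ComplexConjugate BigOperators

/-- The tensor product `x ⊗ conj x'` of a vector with the componentwise conjugate of
another vector, viewed as a vector of `ℂ^n ⊗ ℂ^n ≅ ℂ^{n²}`. -/
noncomputable def tensConj {n : ℕ} (x x' : EuclideanSpace ℂ (Fin n)) :
    EuclideanSpace ℂ (Fin n × Fin n) :=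
  WithLp.toLp 2 fun p => x p.1 * conj (x' p.2)
/-- The state `φ = (1/√n) Σ_b v_b ⊗ conj v_b` built from a basis `v`. -/
noncomputable def meState {n : ℕ} (v : Fin n → EuclideanSpace ℂ (Fin n)) :
    EuclideanSpace ℂ (Fin n × Fin n) :=
  ((Real.sqrt n : ℂ))⁻¹ • ∑ b : Fin n, tensConj (v b) (v b)

/-- The state `ψ_f = -φ + γ_f` where `φ = (1/√n) Σ_b v_{0,b} ⊗ conj v_{0,b}` and
`γ_f = (1/√n) Σ_a v_{a,f(a)} ⊗ conj v_{a,f(a)}`. -/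
noncomputable def psiState {n : ℕ} (v : Fin (n + 1) → Fin n → EuclideanSpace ℂ (Fin n))
    (f : Fin (n + 1) → Fin n) : EuclideanSpace ℂ (Fin n × Fin n) :=
  -meState (v 0) +
    ((Real.sqrt n : ℂ))⁻¹ • ∑ a : Fin (n + 1), tensConj (v a (f a)) (v a (f a))

/-- An affine plane of order `n`, presented through its `n+1` parallel classes
`L 0, …, L n` of lines on the point set `Fin n × Fin n` (an `(n², n²+n, n+1, n, 1)` design). -/
structure IsAffinePlane (n : ℕ) (L : Fin (n + 1) → Finset (Finset (Fin n × Fin n))) :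
    Prop where
  card_class : ∀ i, (L i).card = n
  card_line : ∀ i, ∀ ℓ ∈ L i, ℓ.card = n
  parallel_disjoint : ∀ i, ∀ ℓ ∈ L i, ∀ ℓ' ∈ L i, ℓ ≠ ℓ' → ℓ ∩ ℓ' = ∅
  class_cover : ∀ i, ∀ p : Fin n × Fin n, ∃ ℓ ∈ L i, p ∈ ℓ
  classes_disjoint : ∀ i j, i ≠ j → ∀ ℓ ∈ L i, ℓ ∉ L j
  unique_line : ∀ p q : Fin n × Fin n, p ≠ q →
    ∃! ℓ : Finset (Fin n × Fin n), (∃ i, ℓ ∈ L i) ∧ p ∈ ℓ ∧ q ∈ ℓ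


lemma inner_tensConj {n : ℕ} (x y : EuclideanSpace ℂ (Fin n)) :
    ⟪tensConj x x, tensConj y y⟫ = ((‖⟪x, y⟫‖ ^ 2 : ℝ) : ℂ) := by
  have h : ((‖⟪x, y⟫‖ ^ 2 : ℝ) : ℂ) = ⟪x, y⟫ * conj ⟪x, y⟫ := by
    rw [Complex.mul_conj, Complex.normSq_eq_norm_sq]
  rw [h]
  simp only [tensConj, PiLp.inner_apply, RCLike.inner_apply, map_sum, map_mul,
    Complex.conj_conj, Fintype.sum_prod_type, Finset.sum_mul_sum]
  refine Finset.sum_congr rfl fun i _ => Finset.sum_congr rfl fun j _ => ?_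
  ring

lemma inner_psiState {n : ℕ} (hn : 1 ≤ n)
    (v : Fin (n + 1) → Fin n → EuclideanSpace ℂ (Fin n))
    (horth : ∀ a, Orthonormal ℂ (v a))
    (hmub : ∀ a a', a ≠ a' → ∀ b b', ‖⟪v a b, v a' b'⟫‖ ^ 2 = 1 / n)
    (f g : Fin (n + 1) → Fin n) :
    ⟪psiState v f, psiState v g⟫ =
      (((Finset.univ.filter fun a => f a = g a).card : ℂ) - 1) / n := by
  have hn0 : (n : ℂ) ≠ 0 := by exact_mod_cast (by omega : n ≠ 0)
  have hs : (Real.sqrt n : ℂ) * (Real.sqrt n : ℂ) = n := by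
    rw [← Complex.ofReal_mul, Real.mul_self_sqrt (by positivity)]; simp
  have hG : ∀ a b a' b', ⟪tensConj (v a b) (v a b), tensConj (v a' b') (v a' b')⟫ =
      (1 / n : ℂ) + if a = a' then ((if b = b' then 1 else 0) - 1 / n : ℂ) else 0 := by
    intro a b a' b'
    rw [inner_tensConj]
    by_cases h : a = a'
    · subst h
      rw [orthonormal_iff_ite.mp (horth a) b b']
      by_cases hb : b = b' <;> simp [hb]
    · rw [hmub a a' h b b']; simp [h]
  have h1 : ⟪∑ b, tensConj (v 0 b) (v 0 b), ∑ b, tensConj (v 0 b) (v 0 b)⟫ = (n : ℂ) := by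
    simp only [sum_inner, inner_sum, hG]
    simp
  have h2 : ∀ g : Fin (n + 1) → Fin n, ⟪∑ b, tensConj (v 0 b) (v 0 b),
      ∑ a, tensConj (v a (g a)) (v a (g a))⟫ = (n + 1 : ℂ) := by
    intro g
    simp only [sum_inner, inner_sum, hG, Finset.sum_add_distrib]
    simp
    field_simp
    try ring
  have h3 : ⟪∑ a, tensConj (v a (g a)) (v a (g a)),
      ∑ b, tensConj (v 0 b) (v 0 b)⟫ = (n + 1 : ℂ) := by
    rw [← inner_conj_symm, h2]; simp
  have h3' : ⟪∑ a, tensConj (v a (f a)) (v a (f a)),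
      ∑ b, tensConj (v 0 b) (v 0 b)⟫ = (n + 1 : ℂ) := by
    rw [← inner_conj_symm, h2]; simp
  have h4 : ⟪∑ a, tensConj (v a (f a)) (v a (f a)),
      ∑ a, tensConj (v a (g a)) (v a (g a))⟫ =
      (((Finset.univ.filter fun a => f a = g a).card : ℂ) + n + 1) := by
    simp only [sum_inner, inner_sum, hG, Finset.sum_add_distrib]
    simp
    field_simp
    try ring
  have key : ∀ A B C : EuclideanSpace ℂ (Fin n × Fin n),
      ⟪-((Real.sqrt n : ℂ)⁻¹ • A) + (Real.sqrt n : ℂ)⁻¹ • B,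
        -((Real.sqrt n : ℂ)⁻¹ • A) + (Real.sqrt n : ℂ)⁻¹ • C⟫ =
      (n : ℂ)⁻¹ * (⟪A, A⟫ - ⟪A, C⟫ - ⟪B, A⟫ + ⟪B, C⟫) := by
    intro A B C
    simp only [inner_add_left, inner_add_right, inner_neg_left, inner_neg_right,
      inner_smul_left, inner_smul_right, map_inv₀, Complex.conj_ofReal]
    rw [← hs, mul_inv]
    ring
  unfold psiState meState
  rw [key, h1, h2, h3', h4]
  field_simp
  ring

/-- if there exist `n+1` mutually unbiased orthonormal bases of `ℂ^n` and an
affine plane of order `n`, then there is a set `S` of `n²` functions `{0,…,n} → {1,…,n}`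
such that `{ψ_f : f ∈ S}` is an orthonormal basis of `ℂ^n ⊗ ℂ^n`. -/
theorem exists_onb_psiState_of_mub_affinePlane
    (n : ℕ) (hn : 1 ≤ n)
    (v : Fin (n + 1) → Fin n → EuclideanSpace ℂ (Fin n))
    (horth : ∀ a, Orthonormal ℂ (v a))
    (hmub : ∀ a a', a ≠ a' → ∀ b b', ‖⟪v a b, v a' b'⟫‖ ^ 2 = 1 / n)
    (L : Fin (n + 1) → Finset (Finset (Fin n × Fin n)))
    (hL : IsAffinePlane n L) :
    ∃ S : Finset (Fin (n + 1) → Fin n), S.card = n ^ 2 ∧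
      ∃ ob : OrthonormalBasis {f // f ∈ S} ℂ (EuclideanSpace ℂ (Fin n × Fin n)),
        ∀ f : {f // f ∈ S}, ob f = psiState v f.1 := by
  classical
  have hn0 : (n : ℂ) ≠ 0 := by exact_mod_cast (by omega : n ≠ 0)
  choose ℓ hℓ hp using hL.class_cover
  let e : ∀ i, {x // x ∈ L i} ≃ Fin n := fun i => Finset.equivFinOfCardEq (hL.card_class i)
  let F : Fin n × Fin n → Fin (n + 1) → Fin n := fun p i => e i ⟨ℓ i p, hℓ i p⟩
  have hF : ∀ p q i, F p i = F q i ↔ ℓ i p = ℓ i q := by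
    intro p q i
    simp [F]
  have hcard : ∀ p q, p ≠ q → (Finset.univ.filter fun a => F p a = F q a).card = 1 := by
    intro p q hpq
    obtain ⟨l, ⟨⟨i, hi⟩, hpl, hql⟩, huniq⟩ := hL.unique_line p q hpq
    have hline : ∀ r, r ∈ l → ℓ i r = l := by
      intro r hr
      by_contra hne
      have := hL.parallel_disjoint i _ (hℓ i r) _ hi hne
      have h2 : r ∈ ℓ i r ∩ l := Finset.mem_inter.mpr ⟨hp i r, hr⟩
      rw [this] at h2
      simp at h2
    rw [Finset.card_eq_one]
    refine ⟨i, ?_⟩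
    ext a
    simp only [Finset.mem_filter, Finset.mem_univ, true_and, Finset.mem_singleton, hF]
    constructor
    · intro h
      have h2 := huniq (ℓ a p) ⟨⟨a, hℓ a p⟩, hp a p, h ▸ hp a q⟩
      by_contra hne
      exact hL.classes_disjoint a i hne _ (hℓ a p) (h2 ▸ hi)
    · rintro rfl
      rw [hline p hpl, hline q hql]
  have hinj : Function.Injective F := by
    intro p q h
    by_contra hpq
    have := hcard p q hpq
    rw [h] at this
    simp at this
    omega
  have hS : (Finset.univ.image F).card = n ^ 2 := by
    rw [Finset.card_image_of_injective _ hinj]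
    simp [sq]
  refine ⟨Finset.univ.image F, hS, ?_⟩
  have hon : Orthonormal ℂ (fun f : {f // f ∈ Finset.univ.image F} => psiState v f.1) := by
    rw [orthonormal_iff_ite]
    rintro ⟨f, hf⟩ ⟨g, hg⟩
    simp only [Finset.mem_image, Finset.mem_univ, true_and] at hf hg
    obtain ⟨p, rfl⟩ := hf
    obtain ⟨q, rfl⟩ := hg
    rw [inner_psiState hn v horth hmub]
    by_cases hpq : p = q
    · subst hpq
      simp [hn0]
    · have : F p ≠ F q := fun h => hpq (hinj h)
      rw [hcard p q hpq]
      simp [this]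
  have hfin : ∀ inst : Fintype {f // f ∈ Finset.univ.image F},
      Module.finrank ℂ (EuclideanSpace ℂ (Fin n × Fin n)) =
      @Fintype.card {f // f ∈ Finset.univ.image F} inst := by
    intro inst
    rw [Subsingleton.elim inst (Finset.fintypeCoeSort _), Fintype.card_coe, hS]
    simp [sq]
  obtain ⟨b, hb⟩ := Orthonormal.exists_orthonormalBasis_extension_of_card_eq (hfin _)
    (v := fun f : {f // f ∈ Finset.univ.image F} => psiState v f.1) (s := Set.univ)
    (hon.comp _ Subtype.val_injective)
  exact ⟨b, fun f => hb f (Set.mem_univ f)⟩
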